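/- arXiv:2401.06646 — 8 statements merged into one kernel-verified Lean document; each statement's English description precedes it below -/
import Mathlib

section
/- Let f̃ : ℝ → ℝ be a convex function, let ω, x, y ∈ ℝ^r, and let α ∈ ℝ^r satisfy αᵢ > 0 for all i and ∑_{i=1}^r αᵢ = 1. Then ∑_{i=1}^r αᵢ · f̃( (ωᵢ/αᵢ)·(xᵢ − yᵢ) + ωᵀy ) ≥ f̃(ωᵀx), where ωᵀx = ∑_{i=1}^r ωᵢ xᵢ. -/
open Finset in
/-- Jensen-majorizer inequality for a convex function of a linear form. -/
theorem jensen_majorizer_inequality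
    {r : ℕ} (ftilde : ℝ → ℝ) (hconv : ConvexOn ℝ Set.univ ftilde)
    (ω x y α : Fin r → ℝ) (hα : ∀ i, 0 < α i) (hsum : ∑ i, α i = 1) :
    ftilde (∑ i, ω i * x i) ≤
      ∑ i, α i * ftilde (ω i / α i * (x i - y i) + ∑ j, ω j * y j) := by
  have h := hconv.map_sum_le (t := Finset.univ) (w := α)
    (p := fun i => ω i / α i * (x i - y i) + ∑ j, ω j * y j)
    (fun i _ => (hα i).le) hsum (fun i _ => Set.mem_univ _)
  simp only [smul_eq_mul] at h
  have e : ∑ i, α i * (ω i / α i * (x i - y i) + ∑ j, ω j * y j) = ∑ i, ω i * x i := by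
    have e1 : ∀ i, α i * (ω i / α i * (x i - y i) + ∑ j, ω j * y j)
        = (ω i * x i - ω i * y i) + α i * ∑ j, ω j * y j := by
      intro i
      have := (hα i).ne'
      field_simp
    rw [Finset.sum_congr rfl (fun i _ => e1 i), Finset.sum_add_distrib, ← Finset.sum_mul,
      hsum, Finset.sum_sub_distrib]
    ring
  rwa [e] at h
end

section
/- Let v ∈ ℝ^m with vᵢ > 0 for all i, let W be an m×r real matrix with W_{ik} ≥ 0 for all i,k, and let h, h̃ ∈ ℝ^r with h_k > 0 and h̃_k > 0 for all k. Assume ṽᵢ := (Wh̃)ᵢ > 0 and (Wh)ᵢ > 0 for all i. Define d₁(x,y) = x·log(x/y) − x + y for x,y > 0, D_{KL}(v,Wh) = ∑_{i=1}^m d₁(vᵢ, (Wh)ᵢ), and the Jensen majorizer g(h,h̃) = ∑_{i=1}^m ∑_{k=1}^r (W_{ik}·h̃_k/ṽᵢ)·d₁(vᵢ, ṽᵢ·h_k/h̃_k). Then g(h,h̃) ≥ D_{KL}(v,Wh), and g(h̃,h̃) = D_{KL}(v,Wh̃). -/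
open Finset in
/-- The Jensen majorizer for KL-NMF majorizes the KL divergence and is tight at the
anchor point (β = 1 case of the Févotte–Idier majorizer). -/
theorem kl_jensen_majorizer
    {m r : ℕ} (v : Fin m → ℝ) (hv : ∀ i, 0 < v i)
    (W : Matrix (Fin m) (Fin r) ℝ) (hW : ∀ i k, 0 ≤ W i k)
    (h htilde : Fin r → ℝ) (hh : ∀ k, 0 < h k) (hhtilde : ∀ k, 0 < htilde k)
    (hvt : ∀ i, 0 < W.mulVec htilde i) (hvh : ∀ i, 0 < W.mulVec h i)
    (d₁ : ℝ → ℝ → ℝ) (hd₁ : ∀ x y, d₁ x y = x * Real.log (x / y) - x + y) :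
    (∑ i, d₁ (v i) (W.mulVec h i) ≤
        ∑ i, ∑ k, (W i k * htilde k / W.mulVec htilde i) *
          d₁ (v i) (W.mulVec htilde i * h k / htilde k)) ∧
    (∑ i, ∑ k, (W i k * htilde k / W.mulVec htilde i) *
          d₁ (v i) (W.mulVec htilde i * htilde k / htilde k)
        = ∑ i, d₁ (v i) (W.mulVec htilde i)) := by
  have hsum : ∀ i, ∑ k, W i k * htilde k / W.mulVec htilde i = 1 := by
    intro i
    rw [← Finset.sum_div]
    exact div_self (hvt i).ne'
  constructor
  · apply Finset.sum_le_sum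
    intro i _
    have hS := hvh i
    have ht := hvt i
    have hs := hsum i
    have hy : ∑ k, (W i k * htilde k / W.mulVec htilde i) *
        (W.mulVec htilde i * h k / htilde k) = W.mulVec h i := by
      have : W.mulVec h i = ∑ k, W i k * h k := rfl
      rw [this]
      apply Finset.sum_congr rfl
      intro k _
      have h1 := (hhtilde k).ne'
      have h2 := ht.ne'
      generalize W.mulVec htilde i = T at *
      field_simp
    have key : ∀ y, 0 < y → d₁ (v i) (W.mulVec h i) +
        (1 - v i / W.mulVec h i) * (y - W.mulVec h i) ≤ d₁ (v i) y := by
      intro y hy0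
      generalize W.mulVec h i = S at *
      rw [hd₁, hd₁, Real.log_div (hv i).ne' hS.ne', Real.log_div (hv i).ne' hy0.ne']
      have hl := Real.log_le_sub_one_of_pos (div_pos hy0 hS)
      rw [Real.log_div hy0.ne' hS.ne'] at hl
      have h3 := mul_le_mul_of_nonneg_left hl (hv i).le
      have h4 : (1 - v i / S) * (y - S) = y - S - v i * (y / S - 1) := by
        field_simp
      rw [h4]
      linarith
    calc d₁ (v i) (W.mulVec h i)
        = ∑ k, (W i k * htilde k / W.mulVec htilde i) * (d₁ (v i) (W.mulVec h i) +
          (1 - v i / W.mulVec h i) *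
            (W.mulVec htilde i * h k / htilde k - W.mulVec h i)) := by
          have h5 : ∀ k, (W i k * htilde k / W.mulVec htilde i) * (d₁ (v i) (W.mulVec h i) +
            (1 - v i / W.mulVec h i) *
              (W.mulVec htilde i * h k / htilde k - W.mulVec h i))
            = (W i k * htilde k / W.mulVec htilde i) * (d₁ (v i) (W.mulVec h i) -
                (1 - v i / W.mulVec h i) * W.mulVec h i) +
              ((W i k * htilde k / W.mulVec htilde i) *
                (W.mulVec htilde i * h k / htilde k)) * (1 - v i / W.mulVec h i) := by
            intro k
            ring
          rw [Finset.sum_congr rfl (fun k _ => h5 k), Finset.sum_add_distrib,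
            ← Finset.sum_mul, ← Finset.sum_mul, hs, hy]
          ring
      _ ≤ _ := by
          apply Finset.sum_le_sum
          intro k _
          apply mul_le_mul_of_nonneg_left
          · exact key _ (div_pos (mul_pos ht (hh k)) (hhtilde k))
          · exact div_nonneg (mul_nonneg (hW i k) (hhtilde k).le) ht.le
  · apply Finset.sum_congr rfl
    intro i _
    have h6 : ∀ k, W.mulVec htilde i * htilde k / htilde k = W.mulVec htilde i :=
      fun k => mul_div_cancel_right₀ _ (hhtilde k).ne'
    simp only [h6]
    rw [← Finset.sum_mul, hsum, one_mul]
end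

section
/- Let β ∈ (1,2], let v ∈ ℝ^m with vᵢ ≥ 0 for all i, let W be an m×r real matrix with W_{ik} ≥ 0 for all i,k, and let h, h̃ ∈ ℝ^r with h_k > 0 and h̃_k > 0 for all k. Assume ṽᵢ := (Wh̃)ᵢ > 0 and (Wh)ᵢ > 0 for all i. Define d_β(x,y) = (x^β + (β−1)·y^β − β·x·y^{β−1}) / (β(β−1)) for x ≥ 0, y > 0, D_β(v,Wh) = ∑_{i=1}^m d_β(vᵢ, (Wh)ᵢ), and the Jensen majorizer g(h,h̃) = ∑_{i=1}^m ∑_{k=1}^r (W_{ik}·h̃_k/ṽᵢ)·d_β(vᵢ, ṽᵢ·h_k/h̃_k). Then g(h,h̃) ≥ D_β(v,Wh), and g(h̃,h̃) = D_β(v,Wh̃). -/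
open Finset in
/-- The Jensen majorizer for β-NMF, β ∈ (1,2], majorizes the β-divergence and is
tight at the anchor point (Févotte–Idier majorizer). -/
theorem beta_jensen_majorizer
    {m r : ℕ} (β : ℝ) (hβ1 : 1 < β) (hβ2 : β ≤ 2)
    (v : Fin m → ℝ) (hv : ∀ i, 0 ≤ v i)
    (W : Matrix (Fin m) (Fin r) ℝ) (hW : ∀ i k, 0 ≤ W i k)
    (h htilde : Fin r → ℝ) (hh : ∀ k, 0 < h k) (hhtilde : ∀ k, 0 < htilde k)
    (hvt : ∀ i, 0 < W.mulVec htilde i) (hvh : ∀ i, 0 < W.mulVec h i)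
    (dβ : ℝ → ℝ → ℝ)
    (hdβ : ∀ x y, dβ x y =
      (x ^ β + (β - 1) * y ^ β - β * x * y ^ (β - 1)) / (β * (β - 1))) :
    (∑ i, dβ (v i) (W.mulVec h i) ≤
        ∑ i, ∑ k, (W i k * htilde k / W.mulVec htilde i) *
          dβ (v i) (W.mulVec htilde i * h k / htilde k)) ∧
    (∑ i, ∑ k, (W i k * htilde k / W.mulVec htilde i) *
          dβ (v i) (W.mulVec htilde i * htilde k / htilde k)
        = ∑ i, dβ (v i) (W.mulVec htilde i)) := by
  have hw0 : ∀ i k, 0 ≤ W i k * htilde k / W.mulVec htilde i := fun i k =>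
    div_nonneg (mul_nonneg (hW i k) (hhtilde k).le) (hvt i).le
  have hw1 : ∀ i, ∑ k, W i k * htilde k / W.mulVec htilde i = 1 := by
    intro i
    rw [← Finset.sum_div]
    exact div_self (hvt i).ne'
  constructor
  · apply Finset.sum_le_sum
    intro i _
    have hconv : ConvexOn ℝ (Set.Ici (0:ℝ)) (fun y => dβ (v i) y) := by
      have h1 := convexOn_rpow hβ1.le
      have h2 := Real.concaveOn_rpow (p := β - 1) (by linarith) (by linarith)
      have hb : 0 < β * (β - 1) := mul_pos (by linarith) (by linarith)
      have h3 := ((h1.smul (c := (β - 1) / (β * (β - 1)))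
        (div_nonneg (by linarith) hb.le)).sub (h2.smul (c := β * v i / (β * (β - 1)))
        (div_nonneg (mul_nonneg (by linarith) (hv i)) hb.le))).add_const
          ((v i) ^ β / (β * (β - 1)))
      refine h3.congr ?_
      intro y _
      simp only [hdβ, Pi.add_apply, Pi.sub_apply, Pi.smul_apply, smul_eq_mul]
      ring
    have key := hconv.map_sum_le (t := Finset.univ)
      (w := fun k => W i k * htilde k / W.mulVec htilde i)
      (p := fun k => W.mulVec htilde i * h k / htilde k)
      (fun k _ => hw0 i k) (hw1 i)
      (fun k _ => div_nonneg (mul_nonneg (hvt i).le (hh k).le) (hhtilde k).le)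
    have e : ∑ k, (W i k * htilde k / W.mulVec htilde i) •
        (W.mulVec htilde i * h k / htilde k) = W.mulVec h i := by
      change _ = ∑ k, W i k * h k
      apply Finset.sum_congr rfl
      intro k _
      have a := (hvt i).ne'
      have b := (hhtilde k).ne'
      rw [smul_eq_mul]
      field_simp
    rw [e] at key
    simpa only [smul_eq_mul] using key
  · apply Finset.sum_congr rfl
    intro i _
    have : ∀ k, W.mulVec htilde i * htilde k / htilde k = W.mulVec htilde i := fun k =>
      mul_div_cancel_right₀ _ (hhtilde k).ne'
    simp only [this]
    rw [← Finset.sum_mul, hw1, one_mul]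
end

section
/- Let v ∈ ℝ^m with vᵢ > 0, let W be an m×r real matrix with W_{ik} ≥ 0, and let h̃ ∈ ℝ^r with h̃_k > 0 for all k and ṽᵢ := (Wh̃)ᵢ > 0 for all i. Fix k ∈ {1,…,r} and define φ(x) = ∑_{i=1}^m (W_{ik}·h̃_k/ṽᵢ)·d₁(vᵢ, ṽᵢ·x/h̃_k) for x > 0, where d₁(a,b) = a·log(a/b) − a + b. Then φ is differentiable at h̃_k and φ′(h̃_k) = ∑_{i=1}^m W_{ik}·(1 − vᵢ/ṽᵢ), which equals the partial derivative with respect to h_k of h ↦ ∑_{i=1}^m d₁(vᵢ, (Wh)ᵢ) evaluated at h = h̃. -/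
theorem kl_aux_hasDerivAt (a : ℝ) (ha : 0 < a) (f : ℝ → ℝ) (f' x y : ℝ) (hf : HasDerivAt f f' x)
    (hy : f x = y) (hpos : 0 < y) :
    HasDerivAt (fun t => a * Real.log (a / f t) - a + f t) (f' * (1 - a / y)) x := by
  subst hy
  have h1 : HasDerivAt (fun t => a / f t) _ x := (hasDerivAt_const x a).fun_div hf hpos.ne'
  have h2 := ((((h1.log (div_pos ha hpos).ne').const_mul a).sub_const a).add hf)
  refine h2.congr_deriv ?_
  field_simp
  ring

open Finset in
/-- Tangency of gradients at the anchor point for the Jensen KL majorizer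
(condition (c) of the definition of a majorizer). -/
theorem kl_jensen_majorizer_gradient_tangency
    {m r : ℕ} (v : Fin m → ℝ) (hv : ∀ i, 0 < v i)
    (W : Matrix (Fin m) (Fin r) ℝ) (hW : ∀ i k, 0 ≤ W i k)
    (htilde : Fin r → ℝ) (hhtilde : ∀ k, 0 < htilde k)
    (hvt : ∀ i, 0 < W.mulVec htilde i)
    (d₁ : ℝ → ℝ → ℝ) (hd₁ : ∀ a b, d₁ a b = a * Real.log (a / b) - a + b)
    (k : Fin r) :
    HasDerivAt
      (fun x : ℝ => ∑ i, (W i k * htilde k / W.mulVec htilde i) *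
        d₁ (v i) (W.mulVec htilde i * x / htilde k))
      (∑ i, W i k * (1 - v i / W.mulVec htilde i)) (htilde k) ∧
    HasDerivAt
      (fun x : ℝ => ∑ i, d₁ (v i) (W.mulVec (Function.update htilde k x) i))
      (∑ i, W i k * (1 - v i / W.mulVec htilde i)) (htilde k) := by
  constructor
  · refine HasDerivAt.fun_sum fun i _ => ?_
    have hk := (hhtilde k).ne'
    have hi := (hvt i).ne'
    simp only [hd₁]
    have hf : HasDerivAt (fun x : ℝ => W.mulVec htilde i * x / htilde k)
        (W.mulVec htilde i * 1 / htilde k) (htilde k) :=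
      ((hasDerivAt_id' (htilde k)).const_mul _).div_const _
    refine ((kl_aux_hasDerivAt (v i) (hv i) _ _ _ (W.mulVec htilde i) hf
      (by field_simp) (hvt i)).const_mul _).congr_deriv ?_
    field_simp
  · refine HasDerivAt.fun_sum fun i _ => ?_
    simp only [hd₁]
    have hf : HasDerivAt (fun x : ℝ => W.mulVec (Function.update htilde k x) i)
        (W i k) (htilde k) := by
      have h := HasDerivAt.fun_sum (u := Finset.univ) fun j _ =>
        ((hasDerivAt_pi.1 (hasDerivAt_update htilde k (htilde k))) j).const_mul (W i j)
      refine h.congr_deriv ?_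
      simp [Pi.single_apply]
    exact kl_aux_hasDerivAt (v i) (hv i) _ _ _ _ hf (by simp) (hvt i)
end

section
/- Let ε > 0, let v ∈ ℝ^m with vᵢ > 0, let W be an m×r real matrix with W_{ik} ≥ 0 and ∑_{i=1}^m W_{ik} > 0 for the fixed index k, and let h̃ ∈ ℝ^r with h̃_k > 0 and ṽᵢ := (Wh̃)ᵢ > 0 for all i. Define φ(x) = ∑_{i=1}^m (W_{ik}·h̃_k/ṽᵢ)·d₁(vᵢ, ṽᵢ·x/h̃_k) for x > 0, where d₁(a,b) = a·log(a/b) − a + b. Then x* = max( ε , h̃_k · (∑_{i=1}^m W_{ik}·vᵢ/ṽᵢ) / (∑_{i=1}^m W_{ik}) ) is the unique minimizer of φ over the set {x ∈ ℝ : x ≥ ε}. -/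
open Finset in
/-- The multiplicative update of Lee–Seung is the unique minimizer of the
coordinatewise Jensen KL majorizer over {x : x ≥ ε}. -/
theorem mu_unique_minimizer_of_kl_majorizer
    {m r : ℕ} (ε : ℝ) (hε : 0 < ε)
    (v : Fin m → ℝ) (hv : ∀ i, 0 < v i)
    (W : Matrix (Fin m) (Fin r) ℝ) (hW : ∀ i k, 0 ≤ W i k)
    (k : Fin r) (hWk : 0 < ∑ i, W i k)
    (htilde : Fin r → ℝ) (hhtildek : 0 < htilde k)
    (hvt : ∀ i, 0 < W.mulVec htilde i)
    (d₁ : ℝ → ℝ → ℝ) (hd₁ : ∀ a b, d₁ a b = a * Real.log (a / b) - a + b)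
    (φ : ℝ → ℝ)
    (hφ : ∀ x, φ x = ∑ i, (W i k * htilde k / W.mulVec htilde i) *
      d₁ (v i) (W.mulVec htilde i * x / htilde k))
    (xstar : ℝ)
    (hxstar : xstar =
      max ε (htilde k * (∑ i, W i k * v i / W.mulVec htilde i) / ∑ i, W i k)) :
    xstar ∈ {x : ℝ | ε ≤ x} ∧ (∀ x ∈ {x : ℝ | ε ≤ x}, φ xstar ≤ φ x) ∧
      ∀ x ∈ {x : ℝ | ε ≤ x}, (∀ y ∈ {x : ℝ | ε ≤ x}, φ x ≤ φ y) → x = xstar := by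
  have key : ∀ x y, 0 < x → 0 < y → φ x - φ y =
      (∑ i, W i k) * (x - y) -
      (htilde k * ∑ i, W i k * v i / W.mulVec htilde i) * (Real.log x - Real.log y) := by
    intro x y hx hy
    rw [hφ, hφ, ← Finset.sum_sub_distrib, Finset.mul_sum, Finset.sum_mul, Finset.sum_mul,
      ← Finset.sum_sub_distrib]
    refine Finset.sum_congr rfl fun i _ => ?_
    have h1 := hvt i
    have h2 := hv i
    have hl : ∀ z, 0 < z → Real.log (v i / (W.mulVec htilde i * z / htilde k)) =
        Real.log (v i) - (Real.log (W.mulVec htilde i) + Real.log z - Real.log (htilde k)) := by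
      intro z hz
      rw [Real.log_div h2.ne' (by positivity), Real.log_div (by positivity) hhtildek.ne',
        Real.log_mul h1.ne' hz.ne']
    rw [hd₁, hd₁, hl x hx, hl y hy]
    field_simp
    ring
  have hA : 0 < htilde k * ∑ i, W i k * v i / W.mulVec htilde i := by
    refine mul_pos hhtildek ?_
    obtain ⟨i, hi, hi2⟩ := Finset.exists_lt_of_sum_lt (s := Finset.univ)
      (f := fun _ : Fin m => (0 : ℝ)) (g := fun i => W i k) (by simpa using hWk)
    refine Finset.sum_pos' (fun j _ => ?_) ⟨i, hi, ?_⟩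
    · exact div_nonneg (mul_nonneg (hW j k) (hv j).le) (hvt j).le
    · exact div_pos (mul_pos hi2 (hv i)) (hvt i)
  generalize (htilde k * ∑ i, W i k * v i / W.mulVec htilde i) = A at *
  generalize (∑ i, W i k) = B at *
  have hs : ε ≤ xstar := hxstar ▸ le_max_left _ _
  have hs0 : 0 < xstar := hε.trans_le hs
  have strict : ∀ x, ε ≤ x → x ≠ xstar → φ xstar < φ x := by
    intro x hx hne
    have hx0 : 0 < x := hε.trans_le hx
    have h1 := key x xstar hx0 hs0
    have h2 := Real.log_lt_sub_one_of_pos (div_pos hx0 hs0)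
      (fun h => hne ((div_eq_one_iff_eq hs0.ne').1 h))
    rw [Real.log_div hx0.ne' hs0.ne'] at h2
    have h3 := mul_lt_mul_of_pos_left h2 hA
    have h4 : A * (x / xstar - 1) ≤ B * (x - xstar) := by
      have e : A * (x / xstar - 1) = A / xstar * (x - xstar) := by field_simp
      rw [e]
      rcases le_total (A / B) ε with h | h
      · rw [max_eq_left h] at hxstar
        refine mul_le_mul_of_nonneg_right ?_ (by linarith)
        rw [div_le_iff₀ hs0, hxstar]
        rw [div_le_iff₀ hWk] at h
        linarith
      · rw [max_eq_right h] at hxstar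
        have : A / xstar = B := by rw [hxstar]; field_simp
        rw [this]
    linarith
  refine ⟨hs, fun x hx => ?_, fun x hx hmin => ?_⟩
  · by_cases h : x = xstar
    · rw [h]
    · exact (strict x hx h).le
  · by_contra h
    exact absurd (hmin xstar hs) (not_le.2 (strict x hx h))
end

section
/- Let ε > 0, let v ∈ ℝ^m with vᵢ > 0, let W be an m×r real matrix with W_{ik} > 0 for all i,k, and let h̃ ∈ ℝ^r with h̃_k ≥ ε for all k. Define the multiplicative update h⁺ ∈ ℝ^r by h⁺_k = max( ε , h̃_k · (∑_{i=1}^m W_{ik}·vᵢ/(Wh̃)ᵢ) / (∑_{i=1}^m W_{ik}) ). Then D_{KL}(v, Wh⁺) ≤ D_{KL}(v, Wh̃), where D_{KL}(v,u) = ∑_{i=1}^m ( vᵢ·log(vᵢ/uᵢ) − vᵢ + uᵢ ). -/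
theorem kl_aux_k (ε c t p : ℝ) (hε : 0 < ε) (ht : ε ≤ t) (hp : p = max ε c) :
    p - t ≤ c * Real.log (p / t) := by
  have ht0 : 0 < t := lt_of_lt_of_le hε ht
  have hp0 : 0 < p := by rw [hp]; exact lt_of_lt_of_le hε (le_max_left _ _)
  have h1 : p - t ≤ p * Real.log (p / t) := by
    have h := Real.one_sub_inv_le_log_of_pos (div_pos hp0 ht0)
    have h2 := mul_le_mul_of_nonneg_left h hp0.le
    have h3 : p * (1 - (p / t)⁻¹) = p - t := by field_simp
    linarith
  rcases le_total ε c with h | h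
  · rw [max_eq_right h] at hp
    rw [← hp]; exact h1
  · rw [max_eq_left h] at hp
    have hl : Real.log (p / t) ≤ 0 := by
      apply Real.log_nonpos (div_pos hp0 ht0).le
      rw [div_le_one ht0, hp]; exact ht
    have : c ≤ p := by rw [hp]; exact h
    exact h1.trans (mul_le_mul_of_nonpos_right this hl)

theorem kl_aux_i {r : ℕ} (w t p : Fin r → ℝ) (hw : ∀ k, 0 < w k) (ht : ∀ k, 0 < t k)
    (hp : ∀ k, 0 < p k) (u q : ℝ) (hu : u = ∑ k, w k * t k) (hq : q = ∑ k, w k * p k)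
    (hu0 : 0 < u) (hq0 : 0 < q) :
    ∑ k, w k * t k / u * Real.log (p k / t k) ≤ Real.log (q / u) := by
  have key : ∀ k, w k * t k / u * Real.log (p k / t k) ≤
      w k * p k / q - w k * t k / u + w k * t k / u * Real.log (q / u) := by
    intro k
    have hk := ht k
    have hpk := hp k
    have hwk := hw k
    have h := Real.log_le_sub_one_of_pos (x := (p k / t k) / (q / u)) (by positivity)
    rw [Real.log_div (by positivity) (by positivity)] at h
    have h2 := mul_le_mul_of_nonneg_left h (show 0 ≤ w k * t k / u by positivity)
    have h3 : w k * t k / u * ((p k / t k) / (q / u) - 1) = w k * p k / q - w k * t k / u := by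
      field_simp
    rw [h3] at h2
    linarith
  refine (Finset.sum_le_sum fun k _ => key k).trans (le_of_eq ?_)
  rw [Finset.sum_add_distrib, Finset.sum_sub_distrib, ← Finset.sum_mul, ← Finset.sum_div,
    ← Finset.sum_div, ← hu, ← hq, div_self hu0.ne', div_self hq0.ne']
  ring

open Finset in
/-- The multiplicative update for KL-NMF does not increase the KL objective. -/
theorem mu_decreases_kl_objective
    {m r : ℕ} (ε : ℝ) (hε : 0 < ε)
    (v : Fin m → ℝ) (hv : ∀ i, 0 < v i)
    (W : Matrix (Fin m) (Fin r) ℝ) (hW : ∀ i k, 0 < W i k)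
    (htilde : Fin r → ℝ) (hhtilde : ∀ k, ε ≤ htilde k)
    (hplus : Fin r → ℝ)
    (hhplus : ∀ k, hplus k =
      max ε (htilde k * (∑ i, W i k * v i / W.mulVec htilde i) / ∑ i, W i k)) :
    ∑ i, (v i * Real.log (v i / W.mulVec hplus i) - v i + W.mulVec hplus i) ≤
      ∑ i, (v i * Real.log (v i / W.mulVec htilde i) - v i + W.mulVec htilde i) := by
  rcases Nat.eq_zero_or_pos r with hr | hr
  · subst hr
    rw [Subsingleton.elim hplus htilde]
  rcases Nat.eq_zero_or_pos m with hm | hm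
  · subst hm
    simp
  haveI : Nonempty (Fin r) := ⟨⟨0, hr⟩⟩
  haveI : Nonempty (Fin m) := ⟨⟨0, hm⟩⟩
  have ht : ∀ k, 0 < htilde k := fun k => lt_of_lt_of_le hε (hhtilde k)
  have hp : ∀ k, 0 < hplus k := fun k => by
    rw [hhplus k]; exact lt_of_lt_of_le hε (le_max_left _ _)
  have eu : ∀ (x : Fin r → ℝ) i, W.mulVec x i = ∑ k, W i k * x k := fun x i => rfl
  have hu0 : ∀ i, 0 < W.mulVec htilde i := fun i => by
    rw [eu]; exact sum_pos (fun k _ => mul_pos (hW i k) (ht k)) univ_nonempty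
  have hq0 : ∀ i, 0 < W.mulVec hplus i := fun i => by
    rw [eu]; exact sum_pos (fun k _ => mul_pos (hW i k) (hp k)) univ_nonempty
  have hS : ∀ k, 0 < ∑ i, W i k := fun k => sum_pos (fun i _ => hW i k) univ_nonempty
  have hi : ∀ i, (v i * Real.log (v i / W.mulVec hplus i) - v i + W.mulVec hplus i) ≤
      (v i * Real.log (v i / W.mulVec htilde i) - v i + W.mulVec htilde i) +
      ∑ k, (W i k * (hplus k - htilde k) -
        htilde k * (W i k * v i / W.mulVec htilde i) * Real.log (hplus k / htilde k)) := by
    intro i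
    have h := kl_aux_i (W i) htilde hplus (hW i) ht hp _ _ (eu htilde i) (eu hplus i)
      (hu0 i) (hq0 i)
    have h2 := mul_le_mul_of_nonneg_left h (hv i).le
    rw [Real.log_div (hq0 i).ne' (hu0 i).ne'] at h2
    rw [Real.log_div (hv i).ne' (hq0 i).ne', Real.log_div (hv i).ne' (hu0 i).ne']
    have e : ∑ k, (W i k * (hplus k - htilde k) -
        htilde k * (W i k * v i / W.mulVec htilde i) * Real.log (hplus k / htilde k)) =
        W.mulVec hplus i - W.mulVec htilde i -
        v i * ∑ k, W i k * htilde k / W.mulVec htilde i * Real.log (hplus k / htilde k) := by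
      rw [sum_sub_distrib, mul_sum]
      congr 1
      · rw [eu hplus, eu htilde, ← sum_sub_distrib]
        exact sum_congr rfl fun k _ => by ring
      · exact sum_congr rfl fun k _ => by ring
    rw [e]
    linarith
  refine (sum_le_sum fun i _ => hi i).trans ?_
  rw [sum_add_distrib, sum_comm]
  have : ∑ k, ∑ i, (W i k * (hplus k - htilde k) -
        htilde k * (W i k * v i / W.mulVec htilde i) * Real.log (hplus k / htilde k)) ≤ 0 := by
    apply sum_nonpos
    intro k _
    rw [sum_sub_distrib, ← sum_mul, ← sum_mul, ← mul_sum]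
    have h := mul_le_mul_of_nonneg_left
      (kl_aux_k ε _ (htilde k) (hplus k) hε (hhtilde k) (hhplus k)) (hS k).le
    rw [← mul_assoc, mul_div_cancel₀ _ (hS k).ne'] at h
    linarith
  linarith
end

section
/- Let β ∈ [1,2], ε > 0, let X be an m×n real matrix with X_{ij} ≥ 0, let W be an m×r real matrix with W_{ik} ≥ ε, and let Ĥ be an r×n real matrix with Ĥ_{kj} ≥ ε. Then for every k ∈ {1,…,r} and j ∈ {1,…,n}, the multiplicative-update quantity H′_{kj} := Ĥ_{kj} · ( ∑_{i=1}^m W_{ik} · X_{ij} / ((WĤ)_{ij})^{2−β} ) / ( ∑_{i=1}^m W_{ik} · ((WĤ)_{ij})^{β−1} ) satisfies H′_{kj} ≤ (1/ε) · ∑_{i=1}^m X_{ij}. -/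
open Finset in
/-- Boundedness of the multiplicative-update quantity for β-NMF, β ∈ [1,2]. -/
theorem mu_iterates_bounded
    {m n r : ℕ} (β ε : ℝ) (hβ1 : 1 ≤ β) (hβ2 : β ≤ 2) (hε : 0 < ε)
    (X : Matrix (Fin m) (Fin n) ℝ) (hX : ∀ i j, 0 ≤ X i j)
    (W : Matrix (Fin m) (Fin r) ℝ) (hW : ∀ i k, ε ≤ W i k)
    (Hhat : Matrix (Fin r) (Fin n) ℝ) (hHhat : ∀ k j, ε ≤ Hhat k j)
    (k : Fin r) (j : Fin n) :
    Hhat k j * (∑ i, W i k * X i j / ((W * Hhat) i j) ^ (2 - β)) /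
        (∑ i, W i k * ((W * Hhat) i j) ^ (β - 1)) ≤
      (1 / ε) * ∑ i, X i j := by
  have hWp : ∀ i k, 0 < W i k := fun i k => hε.trans_le (hW i k)
  have hHp : ∀ k j, 0 < Hhat k j := fun k j => hε.trans_le (hHhat k j)
  have hle : ∀ i, W i k * Hhat k j ≤ (W * Hhat) i j := by
    intro i
    rw [Matrix.mul_apply]
    exact Finset.single_le_sum (f := fun l => W i l * Hhat l j)
      (fun l _ => (mul_pos (hWp i l) (hHp l j)).le) (Finset.mem_univ k)
  have hV : ∀ i, 0 < (W * Hhat) i j := fun i =>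
    (mul_pos (hWp i k) (hHp k j)).trans_le (hle i)
  generalize W * Hhat = V at *
  have hterm : ∀ i, 0 < W i k * (V i j) ^ (β - 1) := fun i =>
    mul_pos (hWp i k) (Real.rpow_pos_of_pos (hV i) _)
  rw [Finset.mul_sum, Finset.sum_div, Finset.mul_sum]
  apply Finset.sum_le_sum
  intro i _
  have hD : W i k * (V i j) ^ (β - 1) ≤ ∑ i, W i k * (V i j) ^ (β - 1) :=
    Finset.single_le_sum (f := fun i => W i k * (V i j) ^ (β - 1))
      (fun l _ => (hterm l).le) (Finset.mem_univ i)
  have hDp := (hterm i).trans_le hD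
  generalize ∑ i, W i k * (V i j) ^ (β - 1) = D at *
  have hp : 0 < (V i j) ^ (2 - β) := Real.rpow_pos_of_pos (hV i) _
  have hq : 0 < (V i j) ^ (β - 1) := Real.rpow_pos_of_pos (hV i) _
  have hpq : V i j = (V i j) ^ (β - 1) * (V i j) ^ (2 - β) := by
    rw [← Real.rpow_add (hV i)]
    norm_num
  have h1 : Hhat k j * (W i k * X i j / (V i j) ^ (2 - β)) ≤ X i j * (V i j) ^ (β - 1) := by
    rw [← mul_div_assoc, div_le_iff₀ hp, mul_assoc, ← hpq]
    nlinarith [mul_le_mul_of_nonneg_right (hle i) (hX i j)]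
  have h2 : ε * (V i j) ^ (β - 1) ≤ D :=
    (mul_le_mul_of_nonneg_right (hW i k) hq.le).trans hD
  have h3 : (V i j) ^ (β - 1) ≤ D / ε := by
    rw [le_div_iff₀ hε]; linarith
  rw [div_le_iff₀ hDp]
  calc _ ≤ _ := h1
    _ ≤ X i j * (D / ε) := mul_le_mul_of_nonneg_left h3 (hX i j)
    _ = _ := by ring
end

section
/- Let β ∈ [1,2], ε > 0, and let X be an m×n real matrix with X_{ij} > 0 for all i,j. Let (Wᵗ)_{t ≥ −1} and (Hᵗ)_{t ≥ −1} be sequences of m×r and r×n real matrices with all entries ≥ ε, generated as follows: for each t ≥ 0, with bounded nonnegative extrapolation parameters α_Wᵗ, α_Hᵗ, set Ŵᵗ = Wᵗ + α_Wᵗ·max(Wᵗ − Wᵗ⁻¹, 0) and Ĥᵗ = Hᵗ + α_Hᵗ·max(Hᵗ − Hᵗ⁻¹, 0) (entrywise), and define Wᵗ⁺¹_{ik} = max( ε , Ŵᵗ_{ik}·(∑_j Hᵗ_{kj}·X_{ij}/((ŴᵗHᵗ)_{ij})^{2−β}) / (∑_j Hᵗ_{kj}·((ŴᵗHᵗ)_{ij})^{β−1})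 ) and Hᵗ⁺¹_{kj} = max( ε , Ĥᵗ_{kj}·(∑_i Wᵗ⁺¹_{ik}·X_{ij}/((Wᵗ⁺¹Ĥᵗ)_{ij})^{2−β}) / (∑_i Wᵗ⁺¹_{ik}·((Wᵗ⁺¹Ĥᵗ)_{ij})^{β−1}) ). Assume ∑_{t≥1} (α_Hᵗ)²·‖max(Hᵗ − Hᵗ⁻¹,0)‖_F² < ∞ and ∑_{t≥1} (α_Wᵗ)²·‖max(Wᵗ − Wᵗ⁻¹,0)‖_F² < ∞. Then the sequence (Wᵗ, Hᵗ) is bounded, and every limit point (W*, H*) of a convergent subsequence satisfies the KKT conditions of minimizing D_β(X, WH) over {W ≥ ε, H ≥ ε}: namely W* ≥ ε and H* ≥ ε entrywise; G_{ik} := ∑_j H*_{kj}·( ((W*H*)_{ij})^{β−1} − X_{ij}·((W*H*)_{ij})^{β−2} ) ≥ 0 and G_{ik}·(W*_{ik} − ε) = 0 for all i,k; and F_{kj} := ∑_i W*_{ik}·( ((W*H*)_{ij})^{β−1} − X_{ij}·((W*H*)_{ij})^{β−2} ) ≥ 0 and F_{kj}·(H*_{kj} − ε) = 0 for all k,j.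 -/
noncomputable def mueDD (β x y : ℝ) : ℝ := y ^ (β - 1) - x * y ^ (β - 2)

lemma mue_exists_f (β : ℝ) (hβ1 : 1 ≤ β) : ∃ f : ℝ → ℝ → ℝ,
    ∀ x y, 0 < y → HasDerivAt (f x) (mueDD β x y) y := by
  rcases eq_or_lt_of_le hβ1 with h | h
  · subst h
    refine ⟨fun x y => y - x * Real.log y, fun x y hy => ?_⟩
    have := (hasDerivAt_id y).sub ((Real.hasDerivAt_log hy.ne').const_mul x)
    refine this.congr_deriv ?_
    unfold mueDD
    have : (1:ℝ) - 2 = -1 := by norm_num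
    rw [this, Real.rpow_neg_one, sub_self, Real.rpow_zero]
  · refine ⟨fun x y => y ^ β / β - x * (y ^ (β - 1) / (β - 1)), fun x y hy => ?_⟩
    have h1 := (Real.hasDerivAt_rpow_const (x := y) (p := β) (Or.inl hy.ne')).div_const β
    have h2 := (Real.hasDerivAt_rpow_const (x := y) (p := β - 1) (Or.inl hy.ne')).div_const (β - 1)
    refine (h1.sub (h2.const_mul x)).congr_deriv ?_
    unfold mueDD
    have e : β - 1 - 1 = β - 2 := by ring
    have : β - 1 ≠ 0 := by linarith
    have : β ≠ 0 := by linarith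
    rw [e]
    field_simp

lemma mue_hasDeriv_DD (β x y : ℝ) (hy : 0 < y) :
    HasDerivAt (mueDD β x) ((β - 1) * y ^ (β - 2) + x * ((2 - β) * y ^ (β - 3))) y := by
  have h1 := (Real.hasDerivAt_rpow_const (x := y) (p := β - 1) (Or.inl hy.ne'))
  have h2 := (Real.hasDerivAt_rpow_const (x := y) (p := β - 2) (Or.inl hy.ne'))
  have h := h1.sub (h2.const_mul x)
  have e1 : β - 1 - 1 = β - 2 := by ring
  have e2 : β - 2 - 1 = β - 3 := by ring
  rw [e1, e2] at h
  refine h.congr_deriv ?_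
  ring

lemma mue_tangent (F F' F'' : ℝ → ℝ) (a b : ℝ)
    (h1 : ∀ y ∈ Set.Icc a b, HasDerivAt F (F' y) y)
    (h2 : ∀ y ∈ Set.Icc a b, HasDerivAt F' (F'' y) y)
    (h3 : ∀ y ∈ Set.Icc a b, 0 ≤ F'' y) (y z : ℝ)
    (hy : y ∈ Set.Icc a b) (hz : z ∈ Set.Icc a b) :
    F y + F' y * (z - y) ≤ F z := by
  have hmono : MonotoneOn F' (Set.Icc a b) := by
    apply monotoneOn_of_deriv_nonneg (convex_Icc a b)
    · exact fun u hu => (h2 u hu).continuousAt.continuousWithinAt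
    · exact fun u hu => (h2 u (interior_subset hu)).differentiableAt.differentiableWithinAt
    · intro u hu
      rw [(h2 u (interior_subset hu)).deriv]
      exact h3 u (interior_subset hu)
  rcases lt_trichotomy y z with hlt | heq | hlt
  · have hsub : ∀ u ∈ Set.Icc y z, u ∈ Set.Icc a b := fun u hu =>
      ⟨hy.1.trans hu.1, hu.2.trans hz.2⟩
    obtain ⟨c, hc, e⟩ := exists_hasDerivAt_eq_slope F F' hlt
      (fun u hu => (h1 u (hsub u hu)).continuousAt.continuousWithinAt)
      (fun u hu => h1 u (hsub u (Set.Ioo_subset_Icc_self hu)))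
    have := hmono hy (hsub c (Set.Ioo_subset_Icc_self hc)) hc.1.le
    rw [eq_div_iff (by linarith)] at e
    nlinarith
  · subst heq; simp
  · have hsub : ∀ u ∈ Set.Icc z y, u ∈ Set.Icc a b := fun u hu =>
      ⟨hz.1.trans hu.1, hu.2.trans hy.2⟩
    obtain ⟨c, hc, e⟩ := exists_hasDerivAt_eq_slope F F' hlt
      (fun u hu => (h1 u (hsub u hu)).continuousAt.continuousWithinAt)
      (fun u hu => h1 u (hsub u (Set.Ioo_subset_Icc_self hu)))
    have := hmono (hsub c (Set.Ioo_subset_Icc_self hc)) hy hc.2.le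
    rw [eq_div_iff (by linarith)] at e
    nlinarith

/-- two-sided quadratic bounds -/
lemma mue_quad (β : ℝ) (hβ1 : 1 ≤ β) (hβ2 : β ≤ 2) (f : ℝ → ℝ → ℝ)
    (hf : ∀ x y, 0 < y → HasDerivAt (f x) (mueDD β x y) y)
    (a b δ M : ℝ) (ha : 0 < a) (hab : a ≤ b) (hδ : 0 < δ) :
    ∃ μ L : ℝ, 0 < μ ∧ 0 ≤ L ∧ ∀ x, δ ≤ x → x ≤ M → ∀ y ∈ Set.Icc a b, ∀ z ∈ Set.Icc a b,
      f x y + mueDD β x y * (z - y) + μ * (z - y) ^ 2 ≤ f x z ∧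
      f x z ≤ f x y + mueDD β x y * (z - y) + L * (z - y) ^ 2 := by
  have hb : 0 < b := by linarith
  set μ := min (b ^ (β - 2)) (δ * b ^ (β - 3)) with hμ
  set L := a ^ (β - 2) + |M| * a ^ (β - 3) with hL
  have hμ0 : 0 < μ := lt_min (by positivity) (by positivity)
  have hL0 : 0 ≤ L := by positivity
  refine ⟨μ / 2, L / 2, by positivity, by positivity, ?_⟩
  intro x hx1 hx2 y hy z hz
  have hbound : ∀ u ∈ Set.Icc a b,
      μ ≤ (β - 1) * u ^ (β - 2) + x * ((2 - β) * u ^ (β - 3)) ∧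
      (β - 1) * u ^ (β - 2) + x * ((2 - β) * u ^ (β - 3)) ≤ L := by
    intro u hu
    have hu0 : 0 < u := lt_of_lt_of_le ha hu.1
    have l2 : b ^ (β - 2) ≤ u ^ (β - 2) := Real.rpow_le_rpow_of_nonpos hu0 hu.2 (by linarith)
    have l3 : b ^ (β - 3) ≤ u ^ (β - 3) := Real.rpow_le_rpow_of_nonpos hu0 hu.2 (by linarith)
    have m2 : u ^ (β - 2) ≤ a ^ (β - 2) := Real.rpow_le_rpow_of_nonpos ha hu.1 (by linarith)
    have m3 : u ^ (β - 3) ≤ a ^ (β - 3) := Real.rpow_le_rpow_of_nonpos ha hu.1 (by linarith)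
    have b3 : 0 < b ^ (β - 3) := by positivity
    have u2 : 0 < u ^ (β - 2) := by positivity
    have u3 : 0 < u ^ (β - 3) := by positivity
    have hx0 : 0 ≤ x := by linarith
    have c1 : μ ≤ u ^ (β - 2) := (min_le_left _ _).trans l2
    have c2 : μ ≤ x * u ^ (β - 3) := (min_le_right _ _).trans (by gcongr)
    have c3 : x * u ^ (β - 3) ≤ |M| * a ^ (β - 3) := by
      have := le_abs_self M
      gcongr
      linarith
    have c4 : 0 < x * u ^ (β - 3) := by nlinarith
    constructor
    · nlinarith
    · nlinarith
  constructor
  · have := mue_tangent (fun u => f x u - μ / 2 * u ^ 2) (fun u => mueDD β x u - μ * u)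
      (fun u => (β - 1) * u ^ (β - 2) + x * ((2 - β) * u ^ (β - 3)) - μ) a b
      (fun u hu => by
        refine ((hf x u (lt_of_lt_of_le ha hu.1)).sub
          (((hasDerivAt_id u).pow 2).const_mul (μ / 2))).congr_deriv ?_
        simp; ring)
      (fun u hu => by
        refine ((mue_hasDeriv_DD β x u (lt_of_lt_of_le ha hu.1)).sub
          ((hasDerivAt_id u).const_mul μ)).congr_deriv ?_
        simp)
      (fun u hu => by linarith [(hbound u hu).1]) y z hy hz
    nlinarith
  · have := mue_tangent (fun u => L / 2 * u ^ 2 - f x u) (fun u => L * u - mueDD β x u)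
      (fun u => L - ((β - 1) * u ^ (β - 2) + x * ((2 - β) * u ^ (β - 3)))) a b
      (fun u hu => by
        refine ((((hasDerivAt_id u).pow 2).const_mul (L / 2)).sub
          (hf x u (lt_of_lt_of_le ha hu.1))).congr_deriv ?_
        simp; ring)
      (fun u hu => by
        refine (((hasDerivAt_id u).const_mul L).sub
          (mue_hasDeriv_DD β x u (lt_of_lt_of_le ha hu.1))).congr_deriv ?_
        simp)
      (fun u hu => by linarith [(hbound u hu).2]) y z hy hz
    nlinarith

lemma mue_lower (β : ℝ) (hβ1 : 1 ≤ β) (hβ2 : β ≤ 2) (f : ℝ → ℝ → ℝ)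
    (hf : ∀ x y, 0 < y → HasDerivAt (f x) (mueDD β x y) y)
    (x y : ℝ) (hx : 0 < x) (hy : 0 < y) : f x x ≤ f x y := by
  obtain ⟨μ, L, hμ, hL, h⟩ := mue_quad β hβ1 hβ2 f hf (min x y) (max x y) x x
    (lt_min hx hy) (min_le_left _ _ |>.trans (le_max_left _ _)) hx
  have := (h x le_rfl le_rfl x ⟨min_le_left _ _, le_max_left _ _⟩
    y ⟨min_le_right _ _, le_max_right _ _⟩).1
  have e : mueDD β x x = 0 := by
    unfold mueDD
    have : β - 1 = 1 + (β - 2) := by ring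
    rw [this, Real.rpow_add hx, Real.rpow_one, sub_self]
  rw [e] at this
  nlinarith [sq_nonneg (y - x)]
/-- Stationarity sign of the surrogate at the updated point. -/
lemma mue_sign {J : Type*} [Fintype J] [Nonempty J] (β ε : ℝ) (hε : 0 < ε)
    (h x yh : J → ℝ) (hh : ∀ j, 0 < h j) (hy : ∀ j, 0 < yh j)
    (wh u w : ℝ) (hwh : 0 < wh) (hw : ε ≤ w)
    (hu : u = max ε (wh * (∑ j, h j * x j / yh j ^ (2 - β)) / (∑ j, h j * yh j ^ (β - 1)))) :
    0 ≤ (∑ j, h j * mueDD β (x j) (yh j * u / wh)) * (w - u) := by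
  set num := ∑ j, h j * x j / yh j ^ (2 - β) with hnum
  set den := ∑ j, h j * yh j ^ (β - 1) with hden
  have hden0 : 0 < den := by
    apply Finset.sum_pos _ Finset.univ_nonempty
    intro j _
    have := hh j
    have := hy j
    positivity
  have hu0 : 0 < u := by rw [hu]; exact lt_of_lt_of_le hε (le_max_left _ _)
  have key : (∑ j, h j * mueDD β (x j) (yh j * u / wh))
      = (u / wh) ^ (β - 2) * (u / wh * den - num) := by
    rw [hnum, hden, mul_sub, Finset.mul_sum, Finset.mul_sum, Finset.mul_sum,
      ← Finset.sum_sub_distrib]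
    refine Finset.sum_congr rfl fun j _ => ?_
    have hq : 0 < u / wh := by positivity
    have e1 : β - 1 = 1 + (β - 2) := by ring
    have e2 : yh j ^ (2 - β) = (yh j ^ (β - 2))⁻¹ := by
      rw [← Real.rpow_neg (hy j).le]; congr 1; ring
    unfold mueDD
    rw [mul_div_assoc, Real.mul_rpow (hy j).le hq.le, Real.mul_rpow (hy j).le hq.le, e2,
      div_inv_eq_mul, e1, Real.rpow_add hq, Real.rpow_one]
    ring
  rw [key]
  have hp : 0 ≤ (u / wh) ^ (β - 2) := by positivity
  rw [mul_assoc]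
  refine mul_nonneg hp ?_
  rcases le_total (wh * num / den) ε with hc | hc
  · rw [max_eq_left hc] at hu
    refine mul_nonneg ?_ (by linarith)
    rw [← hu, div_le_iff₀ hden0] at hc
    rw [sub_nonneg, div_mul_eq_mul_div, le_div_iff₀ hwh]
    linarith
  · rw [max_eq_right hc] at hu
    have : u / wh * den - num = 0 := by
      rw [hu]; field_simp; ring
    rw [this, zero_mul]

lemma mue_row {K J : Type*} [Fintype K] [Fintype J] [Nonempty K] [Nonempty J]
    (β ε : ℝ) (hβ1 : 1 ≤ β) (hβ2 : β ≤ 2) (hε : 0 < ε) (f : ℝ → ℝ → ℝ)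
    (hf : ∀ x y, 0 < y → HasDerivAt (f x) (mueDD β x y) y)
    (δ M : ℝ) (hδ : 0 < δ) (hδM : δ ≤ M) :
    ∃ c L : ℝ, 0 < c ∧ 0 ≤ L ∧ ∀ (x : J → ℝ) (h : K → J → ℝ) (w wh u : K → ℝ),
      (∀ j, δ ≤ x j ∧ x j ≤ M) → (∀ k j, δ ≤ h k j ∧ h k j ≤ M) →
      (∀ k, δ ≤ w k ∧ w k ≤ M) → (∀ k, δ ≤ wh k ∧ wh k ≤ M) → (∀ k, δ ≤ u k ∧ u k ≤ M) →
      (∀ k, ε ≤ w k) →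
      (∀ k, u k = max ε (wh k * (∑ j, h k j * x j / (∑ l, wh l * h l j) ^ (2 - β)) /
        (∑ j, h k j * (∑ l, wh l * h l j) ^ (β - 1)))) →
      ∑ j, f (x j) (∑ k, u k * h k j) + c * ∑ k, (u k - w k) ^ 2 ≤
      ∑ j, f (x j) (∑ k, w k * h k j) + L * ∑ k, (w k - wh k) ^ 2 := by
  have hM : 0 < M := by linarith
  set s : ℝ := (Fintype.card K : ℝ) with hs
  set sJ : ℝ := (Fintype.card J : ℝ) with hsJ
  have hs1 : 1 ≤ s := by rw [hs]; exact_mod_cast Fintype.card_pos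
  have hsJ1 : 1 ≤ sJ := by rw [hsJ]; exact_mod_cast Fintype.card_pos
  have hq1 : δ / M ≤ 1 := (div_le_one hM).2 hδM
  have hq2 : 1 ≤ M / δ := (one_le_div hδ).2 hδM
  set a := δ ^ 2 * (δ / M) with ha
  set b := s * M ^ 2 * (M / δ) with hb
  have ha0 : 0 < a := by positivity
  have haδ : a ≤ δ ^ 2 := by rw [ha]; nlinarith [sq_nonneg δ]
  have hbM : s * M ^ 2 ≤ b := by
    rw [hb]; exact le_mul_of_one_le_right (by positivity) hq2
  have hδMs : δ ^ 2 ≤ s * M ^ 2 := by nlinarith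
  obtain ⟨μ, L, hμ, hL, hquad⟩ := mue_quad β hβ1 hβ2 f hf a b δ M ha0 (by linarith) hδ
  refine ⟨μ * (δ * δ ^ 2 / M), L * (sJ * (M * (s * M ^ 2) / δ)), by positivity, by positivity, ?_⟩
  intro x h w wh u hx hh hw hwh hu hwε hupd
  -- range of products
  have hrange : ∀ v : K → ℝ, (∀ k, δ ≤ v k ∧ v k ≤ M) → ∀ j,
      δ ^ 2 ≤ ∑ k, v k * h k j ∧ ∑ k, v k * h k j ≤ s * M ^ 2 := by
    intro v hv j
    have lo : ∀ k, δ ^ 2 ≤ v k * h k j := fun k => by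
      rw [sq]; exact mul_le_mul (hv k).1 (hh k j).1 hδ.le (by linarith [(hv k).1])
    have hi : ∀ k, v k * h k j ≤ M ^ 2 := fun k => by
      rw [sq]; exact mul_le_mul (hv k).2 (hh k j).2 (by linarith [(hh k j).1]) hM.le
    constructor
    · obtain ⟨k0⟩ := ‹Nonempty K›
      refine (lo k0).trans (Finset.single_le_sum (f := fun k => v k * h k j)
        (fun k _ => (sq_nonneg δ).trans (lo k)) (Finset.mem_univ k0))
    · calc ∑ k, v k * h k j ≤ ∑ _k : K, M ^ 2 := Finset.sum_le_sum fun k _ => hi k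
        _ = s * M ^ 2 := by simp [hs]
  set yh : J → ℝ := fun j => ∑ l, wh l * h l j with hyh
  set yu : J → ℝ := fun j => ∑ l, u l * h l j with hyu
  set yw : J → ℝ := fun j => ∑ l, w l * h l j with hyw
  have hyhr : ∀ j, δ ^ 2 ≤ yh j ∧ yh j ≤ s * M ^ 2 := hrange wh hwh
  have hyur : ∀ j, δ ^ 2 ≤ yu j ∧ yu j ≤ s * M ^ 2 := hrange u hu
  have hywr : ∀ j, δ ^ 2 ≤ yw j ∧ yw j ≤ s * M ^ 2 := hrange w hw
  have hδ2 : 0 < δ ^ 2 := by positivity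
  have hyh0 : ∀ j, 0 < yh j := fun j => lt_of_lt_of_le hδ2 (hyhr j).1
  have hwh0 : ∀ k, 0 < wh k := fun k => lt_of_lt_of_le hδ (hwh k).1
  have mem1 : ∀ t, δ ^ 2 ≤ t ∧ t ≤ s * M ^ 2 → t ∈ Set.Icc a b := fun t ht =>
    ⟨haδ.trans ht.1, ht.2.trans hbM⟩
  have mem2 : ∀ v : K → ℝ, (∀ k, δ ≤ v k ∧ v k ≤ M) → ∀ k j,
      yh j * v k / wh k ∈ Set.Icc a b := by
    intro v hv k j
    have hv0 : 0 < v k := lt_of_lt_of_le hδ (hv k).1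
    have hw0 := hwh0 k
    have r1 : δ / M ≤ v k / wh k :=
      div_le_div₀ hv0.le (hv k).1 (hwh0 k) (hwh k).2
    have r2 : v k / wh k ≤ M / δ :=
      div_le_div₀ hM.le (hv k).2 hδ (hwh k).1
    rw [mul_div_assoc]
    exact ⟨mul_le_mul (hyhr j).1 r1 (by positivity) (hyh0 j).le,
      mul_le_mul (hyhr j).2 r2 (by positivity) (by positivity)⟩
  -- the pointwise inequality
  have hpt : ∀ k j,
      wh k * h k j / yh j * f (x j) (yu j)
        + mueDD β (x j) (yu j) * (u k * h k j - wh k * h k j / yh j * yu j)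
        + h k j * mueDD β (x j) (yh j * u k / wh k) * (w k - u k)
        + μ * (h k j * yh j / wh k) * (u k - w k) ^ 2
      ≤ wh k * h k j / yh j * f (x j) (yh j)
        + mueDD β (x j) (yh j) * (w k * h k j - wh k * h k j)
        + L * (h k j * yh j / wh k) * (w k - wh k) ^ 2 := by
    intro k j
    have A := (hquad (x j) (hx j).1 (hx j).2 (yu j) (mem1 _ (hyur j)) _ (mem2 u hu k j)).1
    have B := (hquad (x j) (hx j).1 (hx j).2 _ (mem2 u hu k j) _ (mem2 w hw k j)).1
    have C := (hquad (x j) (hx j).1 (hx j).2 (yh j) (mem1 _ (hyhr j)) _ (mem2 w hw k j)).2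
    have hp : 0 ≤ wh k * h k j / yh j := by
      have := hwh0 k
      have := hyh0 j
      have : 0 < h k j := lt_of_lt_of_le hδ (hh k j).1
      positivity
    have A' : f (x j) (yu j) + mueDD β (x j) (yu j) * (yh j * u k / wh k - yu j)
        ≤ f (x j) (yh j * u k / wh k) := by
      nlinarith [mul_nonneg hμ.le (sq_nonneg (yh j * u k / wh k - yu j))]
    have T : f (x j) (yu j) + mueDD β (x j) (yu j) * (yh j * u k / wh k - yu j)
        + mueDD β (x j) (yh j * u k / wh k) * (yh j * w k / wh k - yh j * u k / wh k)
        + μ * (yh j * w k / wh k - yh j * u k / wh k) ^ 2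
        ≤ f (x j) (yh j) + mueDD β (x j) (yh j) * (yh j * w k / wh k - yh j)
        + L * (yh j * w k / wh k - yh j) ^ 2 := by linarith
    have T' := mul_le_mul_of_nonneg_left T hp
    have n1 := (hwh0 k).ne'
    have n2 := (hyh0 j).ne'
    generalize mueDD β (x j) (yh j * u k / wh k) = d1 at *
    generalize mueDD β (x j) (yu j) = d2 at *
    generalize mueDD β (x j) (yh j) = d3 at *
    generalize f (x j) (yu j) = f1 at *
    generalize f (x j) (yh j) = f2 at *
    refine le_of_eq_of_le ?_ (T'.trans_eq ?_)
    · field_simp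
      ring
    · field_simp
  -- sum over k
  have hk : ∀ j, f (x j) (yu j)
        + ∑ k, h k j * mueDD β (x j) (yh j * u k / wh k) * (w k - u k)
        + ∑ k, μ * (h k j * yh j / wh k) * (u k - w k) ^ 2
      ≤ f (x j) (yw j) + ∑ k, L * (h k j * yh j / wh k) * (w k - wh k) ^ 2 := by
    intro j
    have S := Finset.sum_le_sum fun k (_ : k ∈ Finset.univ) => hpt k j
    simp only [Finset.sum_add_distrib] at S
    have hp1 : ∑ k, wh k * h k j / yh j = 1 := by
      rw [← Finset.sum_div]; exact div_self (hyh0 j).ne'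
    have z1 : ∑ k, wh k * h k j / yh j * f (x j) (yu j) = f (x j) (yu j) := by
      rw [← Finset.sum_mul, hp1, one_mul]
    have z2 : ∑ k, wh k * h k j / yh j * f (x j) (yh j) = f (x j) (yh j) := by
      rw [← Finset.sum_mul, hp1, one_mul]
    have z3 : ∑ k, mueDD β (x j) (yu j) * (u k * h k j - wh k * h k j / yh j * yu j) = 0 := by
      rw [← Finset.mul_sum, Finset.sum_sub_distrib, ← Finset.sum_mul, hp1, one_mul]
      simp [hyu]
    have z4 : ∑ k, mueDD β (x j) (yh j) * (w k * h k j - wh k * h k j)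
        = mueDD β (x j) (yh j) * (yw j - yh j) := by
      rw [← Finset.mul_sum, Finset.sum_sub_distrib]
    rw [z1, z2, z3, z4] at S
    have D := (hquad (x j) (hx j).1 (hx j).2 (yh j) (mem1 _ (hyhr j)) _ (mem1 _ (hywr j))).1
    have := mul_nonneg hμ.le (sq_nonneg (yw j - yh j))
    linarith
  have S := Finset.sum_le_sum fun j (_ : j ∈ Finset.univ) => hk j
  simp only [Finset.sum_add_distrib] at S
  have s1 : 0 ≤ ∑ j, ∑ k, h k j * mueDD β (x j) (yh j * u k / wh k) * (w k - u k) := by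
    rw [Finset.sum_comm]
    refine Finset.sum_nonneg fun k _ => ?_
    rw [← Finset.sum_mul]
    exact mue_sign β ε hε (h k) x yh (fun j => lt_of_lt_of_le hδ (hh k j).1) hyh0
      (wh k) (u k) (w k) (hwh0 k) (hwε k) (hupd k)
  have hqlo : ∀ k j, δ * δ ^ 2 / M ≤ h k j * yh j / wh k := fun k j =>
    div_le_div₀ (mul_nonneg (hδ.le.trans (hh k j).1) (hyh0 j).le)
      (mul_le_mul (hh k j).1 (hyhr j).1 hδ2.le (hδ.le.trans (hh k j).1)) (hwh0 k) (hwh k).2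
  have hqhi : ∀ k j, h k j * yh j / wh k ≤ M * (s * M ^ 2) / δ := fun k j =>
    div_le_div₀ (by positivity)
      (mul_le_mul (hh k j).2 (hyhr j).2 (hyh0 j).le hM.le) hδ (hwh k).1
  have s2 : μ * (δ * δ ^ 2 / M) * ∑ k, (u k - w k) ^ 2
      ≤ ∑ j, ∑ k, μ * (h k j * yh j / wh k) * (u k - w k) ^ 2 := by
    obtain ⟨j0⟩ := ‹Nonempty J›
    have hnn : ∀ k j, 0 ≤ h k j * yh j / wh k := fun k j =>
      le_trans (by positivity) (hqlo k j)
    refine le_trans ?_ (Finset.single_le_sum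
      (f := fun j => ∑ k, μ * (h k j * yh j / wh k) * (u k - w k) ^ 2)
      (fun j _ => Finset.sum_nonneg fun k _ =>
        mul_nonneg (mul_nonneg hμ.le (hnn k j)) (sq_nonneg _)) (Finset.mem_univ j0))
    rw [Finset.mul_sum]
    refine Finset.sum_le_sum fun k _ => ?_
    have := hqlo k j0
    gcongr
  have s3 : ∑ j, ∑ k, L * (h k j * yh j / wh k) * (w k - wh k) ^ 2
      ≤ L * (sJ * (M * (s * M ^ 2) / δ)) * ∑ k, (w k - wh k) ^ 2 := by
    calc _ ≤ ∑ _j : J, L * (M * (s * M ^ 2) / δ) * ∑ k, (w k - wh k) ^ 2 := by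
          refine Finset.sum_le_sum fun j _ => ?_
          rw [Finset.mul_sum]
          refine Finset.sum_le_sum fun k _ => ?_
          have := hqhi k j
          gcongr
      _ = _ := by
          rw [Finset.sum_const, Finset.card_univ, nsmul_eq_mul]
          ring
  linarith

lemma mue_bound {K J : Type*} [Fintype K] [Fintype J]
    (β ε Mx : ℝ) (hε : 0 < ε) (hMx : 0 ≤ Mx)
    (x : J → ℝ) (h : K → J → ℝ) (wh : K → ℝ) (hx : ∀ j, 0 < x j ∧ x j ≤ Mx)
    (hh : ∀ k j, ε ≤ h k j) (hwh : ∀ k, 0 < wh k) (k : K) :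
    wh k * (∑ j, h k j * x j / (∑ l, wh l * h l j) ^ (2 - β)) /
        (∑ j, h k j * (∑ l, wh l * h l j) ^ (β - 1)) ≤ Mx / ε := by
  have hh0 : ∀ k j, 0 < h k j := fun k j => lt_of_lt_of_le hε (hh k j)
  have hy : ∀ j, wh k * h k j ≤ ∑ l, wh l * h l j := fun j =>
    Finset.single_le_sum (f := fun l => wh l * h l j)
      (fun l _ => (mul_pos (hwh l) (hh0 l j)).le) (Finset.mem_univ k)
  have hy0 : ∀ j, 0 < ∑ l, wh l * h l j := fun j =>
    lt_of_lt_of_le (mul_pos (hwh k) (hh0 k j)) (hy j)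
  refine div_le_of_le_mul₀ ?_ (by positivity) ?_
  · refine Finset.sum_nonneg fun j _ => ?_
    have := hh0 k j
    have := hy0 j
    positivity
  · rw [Finset.mul_sum, Finset.mul_sum]
    refine Finset.sum_le_sum fun j _ => ?_
    have h1 := hy j
    have h2 := hy0 j
    generalize (∑ l, wh l * h l j) = y at *
    have e2 : y ^ (2 - β) = (y ^ (β - 2))⁻¹ := by
      rw [← Real.rpow_neg h2.le]; congr 1; ring
    have e1 : y ^ (β - 1) = y * y ^ (β - 2) := by
      rw [show β - 1 = 1 + (β - 2) by ring, Real.rpow_add h2, Real.rpow_one]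
    rw [e1, e2, div_inv_eq_mul]
    have hp : 0 < y ^ (β - 2) := by positivity
    generalize y ^ (β - 2) = p at *
    have hx1 := (hx j).1
    have hx2 := (hx j).2
    have hk := hh k j
    calc wh k * (h k j * x j * p) = (wh k * h k j) * x j * p := by ring
      _ ≤ y * Mx * p := by gcongr
      _ = Mx / ε * (ε * (y * p)) := by field_simp
      _ ≤ _ := by gcongr

lemma mue_limit {K J : Type*} [Fintype K] [Fintype J] [Nonempty J]
    (β ε : ℝ) (hε : 0 < ε) (x : J → ℝ)
    (hs : ℕ → K → J → ℝ) (ws us : ℕ → K → ℝ) (h : K → J → ℝ) (w : K → ℝ)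
    (hh : ∀ k j, ε ≤ h k j) (hw : ∀ k, ε ≤ w k)
    (th : ∀ k j, Filter.Tendsto (fun s => hs s k j) Filter.atTop (nhds (h k j)))
    (tw : ∀ k, Filter.Tendsto (fun s => ws s k) Filter.atTop (nhds (w k)))
    (tu : ∀ k, Filter.Tendsto (fun s => us s k) Filter.atTop (nhds (w k)))
    (hupd : ∀ s k, us s k = max ε (ws s k *
        (∑ j, hs s k j * x j / (∑ l, ws s l * hs s l j) ^ (2 - β)) /
        (∑ j, hs s k j * (∑ l, ws s l * hs s l j) ^ (β - 1)))) (k : K) :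
    0 ≤ ∑ j, h k j * mueDD β (x j) (∑ l, w l * h l j) ∧
    (∑ j, h k j * mueDD β (x j) (∑ l, w l * h l j)) * (w k - ε) = 0 := by
  have hh0 : ∀ k j, 0 < h k j := fun k j => lt_of_lt_of_le hε (hh k j)
  have hw0 : ∀ k, 0 < w k := fun k => lt_of_lt_of_le hε (hw k)
  have hy0 : ∀ j, 0 < ∑ l, w l * h l j := fun j =>
    Finset.sum_pos (fun l _ => mul_pos (hw0 l) (hh0 l j)) ⟨k, Finset.mem_univ k⟩
  have hden : 0 < ∑ j, h k j * (∑ l, w l * h l j) ^ (β - 1) :=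
    Finset.sum_pos (fun j _ => mul_pos (hh0 k j) (Real.rpow_pos_of_pos (hy0 j) _))
      Finset.univ_nonempty
  have ty : ∀ j, Filter.Tendsto (fun s => ∑ l, ws s l * hs s l j) Filter.atTop
      (nhds (∑ l, w l * h l j)) := fun j =>
    tendsto_finsetSum _ fun l _ => (tw l).mul (th l j)
  have tr : Filter.Tendsto (fun s => us s k) Filter.atTop (nhds (max ε (w k *
        (∑ j, h k j * x j / (∑ l, w l * h l j) ^ (2 - β)) /
        (∑ j, h k j * (∑ l, w l * h l j) ^ (β - 1))))) := by
    simp only [hupd]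
    refine tendsto_const_nhds.max (((tw k).mul ?_).div ?_ hden.ne')
    · refine tendsto_finsetSum _ fun j _ => ((th k j).mul_const _).div ?_
        (Real.rpow_pos_of_pos (hy0 j) _).ne'
      exact (ty j).rpow_const (Or.inl (hy0 j).ne')
    · refine tendsto_finsetSum _ fun j _ => (th k j).mul ?_
      exact (ty j).rpow_const (Or.inl (hy0 j).ne')
  have fix := tendsto_nhds_unique (tu k) tr
  have sg : ∀ v, ε ≤ v →
      0 ≤ (∑ j, h k j * mueDD β (x j) (∑ l, w l * h l j)) * (v - w k) := by
    intro v hv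
    have := mue_sign β ε hε (h k) x (fun j => ∑ l, w l * h l j) (hh0 k) hy0
      (w k) (w k) v (hw0 k) hv fix
    simpa only [mul_div_assoc, div_self (hw0 k).ne', mul_one] using this
  have g0 := sg (w k + 1) (by linarith [hw k])
  have g1 := sg ε le_rfl
  have g : 0 ≤ ∑ j, h k j * mueDD β (x j) (∑ l, w l * h l j) := by linarith
  refine ⟨g, ?_⟩
  have := mul_nonneg g (sub_nonneg.2 (hw k))
  linarith

lemma mue_descent (E a e : ℕ → ℝ) (B : ℝ) (ha : ∀ t, 0 ≤ a t) (he : ∀ t, 0 ≤ e t)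
    (hs : Summable e) (hB : ∀ t, B ≤ E t) (h : ∀ t, E (t+1) + a t ≤ E t + e t) :
    Filter.Tendsto a Filter.atTop (nhds 0) := by
  have key : ∀ N, ∑ t ∈ Finset.range N, a t ≤ E 0 - E N + ∑ t ∈ Finset.range N, e t := by
    intro N
    induction N with
    | zero => simp
    | succ N ih =>
      rw [Finset.sum_range_succ, Finset.sum_range_succ]
      linarith [h N]
  refine (summable_of_sum_range_le (c := E 0 - B + ∑' t, e t) ha fun N => ?_).tendsto_atTop_zero
  linarith [key N, hB N, hs.sum_le_tsum (Finset.range N) (fun t _ => he t)]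

lemma mue_entry {m n : ℕ} (A : Matrix (Fin m) (Fin n) ℝ) (i : Fin m) (j : Fin n) :
    |A i j| ≤ ∑ i, ∑ j, |A i j| :=
  (Finset.single_le_sum (f := fun j => |A i j|) (fun _ _ => abs_nonneg _)
    (Finset.mem_univ j)).trans
  (Finset.single_le_sum (f := fun i => ∑ j, |A i j|)
    (fun _ _ => Finset.sum_nonneg fun _ _ => abs_nonneg _) (Finset.mem_univ i))

lemma mue_entry_tendsto {m n : ℕ} (A : ℕ → Matrix (Fin m) (Fin n) ℝ)
    (h : Filter.Tendsto (fun t => ∑ i, ∑ j, (A t i j) ^ 2) Filter.atTop (nhds 0))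
    (i : Fin m) (j : Fin n) : Filter.Tendsto (fun t => A t i j) Filter.atTop (nhds 0) := by
  have h2 : Filter.Tendsto (fun t => (A t i j) ^ 2) Filter.atTop (nhds 0) := by
    refine squeeze_zero (fun _ => sq_nonneg _) (fun t => ?_) h
    exact (Finset.single_le_sum (f := fun j => (A t i j) ^ 2) (fun _ _ => sq_nonneg _)
      (Finset.mem_univ j)).trans
      (Finset.single_le_sum (f := fun i => ∑ j, (A t i j) ^ 2)
      (fun _ _ => Finset.sum_nonneg fun _ _ => sq_nonneg _) (Finset.mem_univ i))
  have h3 := h2.sqrt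
  simp only [Real.sqrt_sq_eq_abs, Real.sqrt_zero] at h3
  exact (tendsto_zero_iff_abs_tendsto_zero _).2 h3

open Finset in
/-- Theorem 4.1 of the paper: the multiplicative updates with extrapolation (MUe)
for β-NMF, β ∈ [1,2], generate a bounded sequence, and every limit point is a KKT
point of minimizing `D_β(X, WH)` over `{W ≥ ε, H ≥ ε}`. Here the index `t : ℕ` of
the sequences `W, H` corresponds to the iterate `t - 1` of the paper (so `W 0` is
the initial point `W⁻¹` and `W (t+1)` is the iterate `Wᵗ`). -/
theorem mue_betaNMF_limit_points_are_kkt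
    {m n r : ℕ} (β ε : ℝ) (hβ1 : 1 ≤ β) (hβ2 : β ≤ 2) (hε : 0 < ε)
    (X : Matrix (Fin m) (Fin n) ℝ) (hX : ∀ i j, 0 < X i j)
    (W : ℕ → Matrix (Fin m) (Fin r) ℝ) (H : ℕ → Matrix (Fin r) (Fin n) ℝ)
    (hWε : ∀ t i k, ε ≤ W t i k) (hHε : ∀ t k j, ε ≤ H t k j)
    (αW αH : ℕ → ℝ)
    (hαnonneg : ∀ t, 0 ≤ αW t ∧ 0 ≤ αH t)
    (hαbdd : ∃ Cα : ℝ, ∀ t, αW t ≤ Cα ∧ αH t ≤ Cα)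
    (What : ℕ → Matrix (Fin m) (Fin r) ℝ) (Hhat : ℕ → Matrix (Fin r) (Fin n) ℝ)
    (hWhat : ∀ t i k,
      What t i k = W (t+1) i k + αW t * max (W (t+1) i k - W t i k) 0)
    (hHhat : ∀ t k j,
      Hhat t k j = H (t+1) k j + αH t * max (H (t+1) k j - H t k j) 0)
    (hWupd : ∀ t i k, W (t+2) i k =
      max ε (What t i k *
        (∑ j, H (t+1) k j * X i j / ((What t * H (t+1)) i j) ^ (2 - β)) /
        (∑ j, H (t+1) k j * ((What t * H (t+1)) i j) ^ (β - 1))))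
    (hHupd : ∀ t k j, H (t+2) k j =
      max ε (Hhat t k j *
        (∑ i, W (t+2) i k * X i j / ((W (t+2) * Hhat t) i j) ^ (2 - β)) /
        (∑ i, W (t+2) i k * ((W (t+2) * Hhat t) i j) ^ (β - 1))))
    (hsumH : Summable (fun t : ℕ =>
      (αH (t+1)) ^ 2 * ∑ k, ∑ j, (max (H (t+2) k j - H (t+1) k j) 0) ^ 2))
    (hsumW : Summable (fun t : ℕ =>
      (αW (t+1)) ^ 2 * ∑ i, ∑ k, (max (W (t+2) i k - W (t+1) i k) 0) ^ 2)) :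
    (∃ Cb : ℝ, ∀ t, (∀ i k, |W t i k| ≤ Cb) ∧ (∀ k j, |H t k j| ≤ Cb)) ∧
    ∀ (Wstar : Matrix (Fin m) (Fin r) ℝ) (Hstar : Matrix (Fin r) (Fin n) ℝ),
      (∃ φ : ℕ → ℕ, StrictMono φ ∧
        (∀ i k, Filter.Tendsto (fun s => W (φ s) i k) Filter.atTop
          (nhds (Wstar i k))) ∧
        (∀ k j, Filter.Tendsto (fun s => H (φ s) k j) Filter.atTop
          (nhds (Hstar k j)))) →
      (∀ i k, ε ≤ Wstar i k) ∧ (∀ k j, ε ≤ Hstar k j) ∧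
      (∀ i k,
        0 ≤ ∑ j, Hstar k j * (((Wstar * Hstar) i j) ^ (β - 1) -
              X i j * ((Wstar * Hstar) i j) ^ (β - 2)) ∧
        (∑ j, Hstar k j * (((Wstar * Hstar) i j) ^ (β - 1) -
              X i j * ((Wstar * Hstar) i j) ^ (β - 2))) * (Wstar i k - ε) = 0) ∧
      (∀ k j,
        0 ≤ ∑ i, Wstar i k * (((Wstar * Hstar) i j) ^ (β - 1) -
              X i j * ((Wstar * Hstar) i j) ^ (β - 2)) ∧
        (∑ i, Wstar i k * (((Wstar * Hstar) i j) ^ (β - 1) -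
              X i j * ((Wstar * Hstar) i j) ^ (β - 2))) * (Hstar k j - ε) = 0) := by

  have hmulc : ∀ (A : Matrix (Fin m) (Fin r) ℝ) (B : Matrix (Fin r) (Fin n) ℝ) i j,
      (A * B) i j = ∑ l, B l j * A i l := fun A B i j => by
    rw [Matrix.mul_apply]; exact Finset.sum_congr rfl fun l _ => mul_comm _ _
  have hWhatε : ∀ t i k, ε ≤ What t i k := fun t i k => by
    rw [hWhat]
    have := mul_nonneg (hαnonneg t).1 (le_max_right (W (t+1) i k - W t i k) 0)
    linarith [hWε (t+1) i k]
  have hHhatε : ∀ t k j, ε ≤ Hhat t k j := fun t k j => by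
    rw [hHhat]
    have := mul_nonneg (hαnonneg t).2 (le_max_right (H (t+1) k j - H t k j) 0)
    linarith [hHε (t+1) k j]
  obtain ⟨Mx, hMx0, hMx⟩ : ∃ Mx : ℝ, 0 ≤ Mx ∧ ∀ i j, X i j ≤ Mx :=
    ⟨∑ i, ∑ j, |X i j|, Finset.sum_nonneg fun _ _ => Finset.sum_nonneg fun _ _ => abs_nonneg _,
      fun i j => (le_abs_self _).trans (mue_entry X i j)⟩
  have hWupd' : ∀ t i k, W (t+2) i k =
      max ε (What t i k *
        (∑ j, H (t+1) k j * X i j / (∑ l, What t i l * H (t+1) l j) ^ (2 - β)) /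
        (∑ j, H (t+1) k j * (∑ l, What t i l * H (t+1) l j) ^ (β - 1))) := fun t i k => by
    rw [hWupd t i k]; simp only [Matrix.mul_apply]
  have hHupd' : ∀ t k j, H (t+2) k j =
      max ε (Hhat t k j *
        (∑ i, W (t+2) i k * X i j / (∑ l, Hhat t l j * W (t+2) i l) ^ (2 - β)) /
        (∑ i, W (t+2) i k * (∑ l, Hhat t l j * W (t+2) i l) ^ (β - 1))) := fun t k j => by
    rw [hHupd t k j]; simp only [hmulc]
  have hWb2 : ∀ t i k, W (t+2) i k ≤ max ε (Mx / ε) := fun t i k => by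
    rw [hWupd' t i k]
    exact max_le_max le_rfl (mue_bound β ε Mx hε hMx0 (fun j => X i j) (H (t+1))
      (fun k => What t i k) (fun j => ⟨hX i j, hMx i j⟩) (hHε (t+1))
      (fun k => lt_of_lt_of_le hε (hWhatε t i k)) k)
  have hHb2 : ∀ t k j, H (t+2) k j ≤ max ε (Mx / ε) := fun t k j => by
    rw [hHupd' t k j]
    exact max_le_max le_rfl (mue_bound β ε Mx hε hMx0 (fun i => X i j)
      (fun k i => W (t+2) i k)
      (fun k => Hhat t k j) (fun i => ⟨hX i j, hMx i j⟩) (fun k i => hWε (t+2) i k)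
      (fun k => lt_of_lt_of_le hε (hHhatε t k j)) k)
  obtain ⟨Cb, hCb⟩ :
      ∃ Cb : ℝ, ∀ t, (∀ i k, |W t i k| ≤ Cb) ∧ (∀ k j, |H t k j| ≤ Cb) := by
    set SW : ℕ → ℝ := fun t => ∑ i, ∑ k, |W t i k| with hSW
    set SH : ℕ → ℝ := fun t => ∑ k, ∑ j, |H t k j| with hSH
    have pW : ∀ t, 0 ≤ SW t := fun t =>
      Finset.sum_nonneg fun _ _ => Finset.sum_nonneg fun _ _ => abs_nonneg _
    have pH : ∀ t, 0 ≤ SH t := fun t =>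
      Finset.sum_nonneg fun _ _ => Finset.sum_nonneg fun _ _ => abs_nonneg _
    have p0 : 0 ≤ max ε (Mx / ε) := hε.le.trans (le_max_left _ _)
    refine ⟨max ε (Mx / ε) + SW 0 + SW 1 + SH 0 + SH 1, fun t => ⟨fun i k => ?_, fun k j => ?_⟩⟩
    · match t with
      | 0 => linarith [mue_entry (W 0) i k, pW 0, pW 1, pH 0, pH 1]
      | 1 => linarith [mue_entry (W 1) i k, pW 0, pW 1, pH 0, pH 1]
      | t+2 =>
        rw [abs_of_nonneg (hε.le.trans (hWε _ i k))]
        linarith [hWb2 t i k, pW 0, pW 1, pH 0, pH 1]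
    · match t with
      | 0 => linarith [mue_entry (H 0) k j, pW 0, pW 1, pH 0, pH 1]
      | 1 => linarith [mue_entry (H 1) k j, pW 0, pW 1, pH 0, pH 1]
      | t+2 =>
        rw [abs_of_nonneg (hε.le.trans (hHε _ k j))]
        linarith [hHb2 t k j, pW 0, pW 1, pH 0, pH 1]
  refine ⟨⟨Cb, hCb⟩, ?_⟩
  rintro Ws Hs ⟨φ, hφ, tW, tH⟩
  have hWs : ∀ i k, ε ≤ Ws i k := fun i k =>
    ge_of_tendsto' (tW i k) fun s => hWε _ i k
  have hHs : ∀ k j, ε ≤ Hs k j := fun k j =>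
    ge_of_tendsto' (tH k j) fun s => hHε _ k j
  refine ⟨hWs, hHs, ?_⟩
  rcases Nat.eq_zero_or_pos m with hm | hm
  · subst hm
    exact ⟨fun i => i.elim0, fun k j => by simp⟩
  rcases Nat.eq_zero_or_pos n with hn | hn
  · subst hn
    exact ⟨fun i k => by simp, fun k j => j.elim0⟩
  rcases Nat.eq_zero_or_pos r with hr | hr
  · subst hr
    exact ⟨fun i k => k.elim0, fun k => k.elim0⟩
  haveI : Nonempty (Fin m) := ⟨⟨0, hm⟩⟩
  haveI : Nonempty (Fin n) := ⟨⟨0, hn⟩⟩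
  haveI : Nonempty (Fin r) := ⟨⟨0, hr⟩⟩
  obtain ⟨f, hf⟩ := mue_exists_f β hβ1
  -- uniform bounds
  obtain ⟨δ, hδ, hδε, hδX⟩ : ∃ δ : ℝ, 0 < δ ∧ δ ≤ ε ∧ ∀ i j, δ ≤ X i j := by
    obtain ⟨p, hp⟩ := Finite.exists_min (fun p : Fin m × Fin n => X p.1 p.2)
    exact ⟨min ε (X p.1 p.2), lt_min hε (hX _ _), min_le_left _ _,
      fun i j => (min_le_right _ _).trans (hp (i, j))⟩
  obtain ⟨Cα, hCα⟩ := hαbdd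
  have hCα0 : 0 ≤ Cα := (hαnonneg 0).1.trans (hCα 0).1
  have hWC : ∀ t i k, W t i k ≤ Cb := fun t i k => (le_abs_self _).trans ((hCb t).1 i k)
  have hHC : ∀ t k j, H t k j ≤ Cb := fun t k j => (le_abs_self _).trans ((hCb t).2 k j)
  have hCb0 : 0 < Cb := lt_of_lt_of_le hε ((hWε 0 ⟨0, hm⟩ ⟨0, hr⟩).trans (hWC 0 _ _))
  set M := ε + Mx + Cb + Cα * Cb with hM
  have hCC : 0 ≤ Cα * Cb := by positivity
  have hδM : δ ≤ M := by linarith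
  have bW : ∀ t i k, δ ≤ W t i k ∧ W t i k ≤ M := fun t i k =>
    ⟨hδε.trans (hWε t i k), by linarith [hWC t i k]⟩
  have bH : ∀ t k j, δ ≤ H t k j ∧ H t k j ≤ M := fun t k j =>
    ⟨hδε.trans (hHε t k j), by linarith [hHC t k j]⟩
  have bX : ∀ i j, δ ≤ X i j ∧ X i j ≤ M := fun i j =>
    ⟨hδX i j, by linarith [hMx i j]⟩
  have bWh : ∀ t i k, δ ≤ What t i k ∧ What t i k ≤ M := fun t i k => by
    refine ⟨hδε.trans (hWhatε t i k), ?_⟩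
    rw [hWhat]
    have h1 : max (W (t+1) i k - W t i k) 0 ≤ Cb :=
      max_le (by linarith [hWC (t+1) i k, hWε t i k]) hCb0.le
    have := mul_le_mul (hCα t).1 h1 (le_max_right _ _) hCα0
    linarith [hWC (t+1) i k]
  have bHh : ∀ t k j, δ ≤ Hhat t k j ∧ Hhat t k j ≤ M := fun t k j => by
    refine ⟨hδε.trans (hHhatε t k j), ?_⟩
    rw [hHhat]
    have h1 : max (H (t+1) k j - H t k j) 0 ≤ Cb :=
      max_le (by linarith [hHC (t+1) k j, hHε t k j]) hCb0.le
    have := mul_le_mul (hCα t).2 h1 (le_max_right _ _) hCα0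
    linarith [hHC (t+1) k j]
  obtain ⟨c1, L1, hc1, hL1, row1⟩ := mue_row (K := Fin r) (J := Fin n) β ε hβ1 hβ2 hε f hf
    δ M hδ hδM
  obtain ⟨c2, L2, hc2, hL2, row2⟩ := mue_row (K := Fin r) (J := Fin m) β ε hβ1 hβ2 hε f hf
    δ M hδ hδM
  set eW : ℕ → ℝ := fun t =>
    (αW (t+1)) ^ 2 * ∑ i, ∑ k, (max (W (t+2) i k - W (t+1) i k) 0) ^ 2 with heW
  set eH : ℕ → ℝ := fun t =>
    (αH (t+1)) ^ 2 * ∑ k, ∑ j, (max (H (t+2) k j - H (t+1) k j) 0) ^ 2 with heH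
  have heW0 : ∀ t, 0 ≤ eW t := fun t => by positivity
  have heH0 : ∀ t, 0 ≤ eH t := fun t => by positivity
  have eW' : ∀ t, ∑ i, ∑ k, (W (t+2) i k - What (t+1) i k) ^ 2 = eW t := fun t => by
    simp only [heW, Finset.mul_sum]
    refine Finset.sum_congr rfl fun i _ => Finset.sum_congr rfl fun k _ => ?_
    rw [hWhat]; ring
  have eH' : ∀ t, ∑ k, ∑ j, (H (t+2) k j - Hhat (t+1) k j) ^ 2 = eH t := fun t => by
    simp only [heH, Finset.mul_sum]
    refine Finset.sum_congr rfl fun i _ => Finset.sum_congr rfl fun k _ => ?_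
    rw [hHhat]; ring
  have stepW : ∀ t, ∑ i, ∑ j, f (X i j) ((W (t+3) * H (t+2)) i j)
        + c1 * ∑ i, ∑ k, (W (t+3) i k - W (t+2) i k) ^ 2
      ≤ ∑ i, ∑ j, f (X i j) ((W (t+2) * H (t+2)) i j) + L1 * eW t := by
    intro t
    have S := Finset.sum_le_sum fun i (_ : i ∈ Finset.univ) =>
      row1 (fun j => X i j) (H (t+2)) (fun k => W (t+2) i k) (fun k => What (t+1) i k)
      (fun k => W (t+3) i k) (bX i) (bH (t+2)) (bW (t+2) i) (bWh (t+1) i) (bW (t+3) i)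
      (hWε (t+2) i) (hWupd' (t+1) i)
    simp only [Finset.sum_add_distrib, ← Finset.mul_sum] at S
    rw [eW'] at S
    simpa only [Matrix.mul_apply] using S
  have stepH : ∀ t, ∑ i, ∑ j, f (X i j) ((W (t+3) * H (t+3)) i j)
        + c2 * ∑ k, ∑ j, (H (t+3) k j - H (t+2) k j) ^ 2
      ≤ ∑ i, ∑ j, f (X i j) ((W (t+3) * H (t+2)) i j) + L2 * eH t := by
    intro t
    have S := Finset.sum_le_sum fun j (_ : j ∈ Finset.univ) =>
      row2 (fun i => X i j) (fun k i => W (t+3) i k) (fun k => H (t+2) k j)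
      (fun k => Hhat (t+1) k j) (fun k => H (t+3) k j) (fun i => bX i j)
      (fun k i => bW (t+3) i k) (fun k => bH (t+2) k j) (fun k => bHh (t+1) k j)
      (fun k => bH (t+3) k j) (fun k => hHε (t+2) k j) (fun k => hHupd' (t+1) k j)
    simp only [Finset.sum_add_distrib, ← Finset.mul_sum] at S
    rw [Finset.sum_comm (f := fun j k => (H (t+2) k j - Hhat (t+1) k j) ^ 2), eH',
      Finset.sum_comm (f := fun j k => (H (t+3) k j - H (t+2) k j) ^ 2),
      Finset.sum_comm (f := fun j i => f (X i j) (∑ k, H (t+3) k j * W (t+3) i k)),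
      Finset.sum_comm (f := fun j i => f (X i j) (∑ k, H (t+2) k j * W (t+3) i k))] at S
    simpa only [hmulc] using S
  have hprod0 : ∀ t i j, 0 < (W t * H t) i j := fun t i j => by
    rw [Matrix.mul_apply]
    exact Finset.sum_pos (fun l _ => mul_pos (lt_of_lt_of_le hε (hWε t i l))
      (lt_of_lt_of_le hε (hHε t l j))) Finset.univ_nonempty
  have desc := mue_descent (fun t => ∑ i, ∑ j, f (X i j) ((W (t+2) * H (t+2)) i j))
    (fun t => c1 * ∑ i, ∑ k, (W (t+3) i k - W (t+2) i k) ^ 2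
      + c2 * ∑ k, ∑ j, (H (t+3) k j - H (t+2) k j) ^ 2)
    (fun t => L1 * eW t + L2 * eH t) (∑ i, ∑ j, f (X i j) (X i j))
    (fun t => by positivity)
    (fun t => add_nonneg (mul_nonneg hL1 (heW0 t)) (mul_nonneg hL2 (heH0 t)))
    ((hsumW.mul_left L1).add (hsumH.mul_left L2))
    (fun t => Finset.sum_le_sum fun i _ => Finset.sum_le_sum fun j _ =>
      mue_lower β hβ1 hβ2 f hf _ _ (hX i j) (hprod0 _ i j))
    (fun t => by
      have := stepW t
      have := stepH t
      show ∑ i, ∑ j, f (X i j) ((W (t+3) * H (t+3)) i j) + _ ≤ _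
      linarith)
  have dW : Filter.Tendsto (fun t => ∑ i, ∑ k, (W (t+3) i k - W (t+2) i k) ^ 2)
      Filter.atTop (nhds 0) := by
    have h0 := desc.const_mul c1⁻¹
    rw [mul_zero] at h0
    refine squeeze_zero (fun t => by positivity) (fun t => ?_) h0
    rw [mul_add, inv_mul_cancel_left₀ hc1.ne']
    have : 0 ≤ c1⁻¹ * (c2 * ∑ k, ∑ j, (H (t+3) k j - H (t+2) k j) ^ 2) := by positivity
    linarith
  have dH : Filter.Tendsto (fun t => ∑ k, ∑ j, (H (t+3) k j - H (t+2) k j) ^ 2)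
      Filter.atTop (nhds 0) := by
    have h0 := desc.const_mul c2⁻¹
    rw [mul_zero] at h0
    refine squeeze_zero (fun t => by positivity) (fun t => ?_) h0
    rw [mul_add, inv_mul_cancel_left₀ hc2.ne']
    have : 0 ≤ c2⁻¹ * (c1 * ∑ i, ∑ k, (W (t+3) i k - W (t+2) i k) ^ 2) := by positivity
    linarith
  have dWh : Filter.Tendsto (fun t => ∑ i, ∑ k, (W (t+2) i k - What (t+1) i k) ^ 2)
      Filter.atTop (nhds 0) := by
    simp only [eW']; exact hsumW.tendsto_atTop_zero
  have dHh : Filter.Tendsto (fun t => ∑ k, ∑ j, (H (t+2) k j - Hhat (t+1) k j) ^ 2)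
      Filter.atTop (nhds 0) := by
    simp only [eH']; exact hsumH.tendsto_atTop_zero
  -- the shifted subsequence
  set ψ : ℕ → ℕ := fun s => φ (s + 2) - 2 with hψ
  have hψ2 : ∀ s, ψ s + 2 = φ (s + 2) := fun s => by
    have := hφ.id_le (s + 2)
    simp only [id] at this
    simp only [hψ]; omega
  have tψ : Filter.Tendsto ψ Filter.atTop Filter.atTop := by
    refine Filter.tendsto_atTop_mono (fun s => ?_) Filter.tendsto_id
    have := hφ.id_le (s + 2)
    have := hψ2 s
    simp only [id] at *
    omega
  have tW2 : ∀ i k, Filter.Tendsto (fun s => W (ψ s + 2) i k) Filter.atTop (nhds (Ws i k)) :=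
    fun i k => by
      simp only [hψ2]; exact (tW i k).comp (Filter.tendsto_add_atTop_nat 2)
  have tH2 : ∀ k j, Filter.Tendsto (fun s => H (ψ s + 2) k j) Filter.atTop (nhds (Hs k j)) :=
    fun k j => by
      simp only [hψ2]; exact (tH k j).comp (Filter.tendsto_add_atTop_nat 2)
  have tW3 : ∀ i k, Filter.Tendsto (fun s => W (ψ s + 3) i k) Filter.atTop (nhds (Ws i k)) :=
    fun i k => by
      have := (tW2 i k).add ((mue_entry_tendsto (fun t => W (t+3) - W (t+2)) dW i k).comp tψ)
      simpa using this
  have tH3 : ∀ k j, Filter.Tendsto (fun s => H (ψ s + 3) k j) Filter.atTop (nhds (Hs k j)) :=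
    fun k j => by
      have := (tH2 k j).add ((mue_entry_tendsto (fun t => H (t+3) - H (t+2)) dH k j).comp tψ)
      simpa using this
  have tWh : ∀ i k, Filter.Tendsto (fun s => What (ψ s + 1) i k) Filter.atTop
      (nhds (Ws i k)) := fun i k => by
      have := (tW2 i k).sub ((mue_entry_tendsto (fun t => W (t+2) - What (t+1)) dWh i k).comp tψ)
      simpa using this
  have tHh : ∀ k j, Filter.Tendsto (fun s => Hhat (ψ s + 1) k j) Filter.atTop
      (nhds (Hs k j)) := fun k j => by
      have := (tH2 k j).sub ((mue_entry_tendsto (fun t => H (t+2) - Hhat (t+1)) dHh k j).comp tψ)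
      simpa using this
  constructor
  · intro i k
    have := mue_limit β ε hε (fun j => X i j) (fun s => H (ψ s + 2))
      (fun s k => What (ψ s + 1) i k) (fun s k => W (ψ s + 3) i k) Hs (fun k => Ws i k)
      hHs (hWs i) tH2 (tWh i) (tW3 i) (fun s k => hWupd' (ψ s + 1) i k) k
    simpa only [mueDD, ← Matrix.mul_apply] using this
  · intro k j
    have := mue_limit β ε hε (fun i => X i j) (fun s k i => W (ψ s + 3) i k)
      (fun s k => Hhat (ψ s + 1) k j) (fun s k => H (ψ s + 3) k j) (fun k i => Ws i k)
      (fun k => Hs k j)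
      (fun k i => hWs i k) (fun k => hHs k j) (fun k i => tW3 i k) (fun k => tHh k j)
      (fun k => tH3 k j) (fun s k => hHupd' (ψ s + 1) k j) k
    simpa only [mueDD, ← hmulc] using this
end
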